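/- Let f : 𝕊² → ℝ be a bounded measurable function and let Y_{n0}(θ, φ) = √((2n+1)/(4π)) P_n(cos θ) be the zonal spherical harmonic. Then lim_{n→∞} ∫₀^{2π} ∫₀^π |Y_{n0}(θ, φ)|² f(θ, φ) sin θ dθ dφ = (1/(2π²)) ∫₀^π ∫₀^{2π} f(θ, φ) dφ dθ. -/

import Mathlib

/-! With `u(θ) = √(sin θ) P_n(cos θ)`, the integrand is `(2n + 1)/(4π) · u² · f`, so it suffices
to show that `(2n + 1) u²` tends weakly to the constant `2/π` on `(0, π)`, tested against the
integrable function `F(θ) = ∫ f(θ, φ) dφ`.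

Legendre's equation reads `u'' + q u = 0` with `q = (n + 1/2)² + 1/(4 sin² θ)`. Sonin's energy
`S = u² + u'²/q` has derivative `-u'² q'/q²`. As `q` decreases before `θ = π/2` and increases
after it, the energy is largest there (`soninS_le`); its value `A` at that point is computed from
the Rodrigues formula, and the Wallis product gives `(2n + 1) A → 4/π` (`tendsto_soninA`). Hence `(2n + 1) u²` is bounded
uniformly in `n` and `θ` (`sin_mul_legP_sq_le`), and since `S'/A` is `O(n⁻²)` locally uniformly on
`(0, π)`, `(2n + 1) S → 4/π` pointwise (`tendsto_soninS`).

The energy is equidistributed between its two terms: `(u u'/q)' = S - 2u² - u u' q'/q²`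
(`hasDerivAt_soninG`), where `u u'/q` and the last term are negligible. Integrating by parts
against a polynomial `p(θ)` and using dominated convergence gives
`∫ (2n + 1) u² p → (2/π) ∫ p` (`tendsto_integral_poly`). The uniform bound on `(2n + 1) u²` and the
density of polynomials in `L¹(0, π)` extend this to every integrable `F` (`tendsto_integral_L1`),
and Fubini's theorem concludes.

All quantities are written so as to be smooth on `ℝ`, with no division by `sin θ`. -/

open Real Filter

open scoped Nat

/-- The `n`-th Legendre polynomial (real variable), via the Rodrigues formula. -/
noncomputable def legendre (n : ℕ) (x : ℝ) : ℝ :=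
  (1 / (2 ^ n * (n ! : ℝ))) * iteratedDeriv n (fun t : ℝ => (t ^ 2 - 1) ^ n) x

/-- The zonal spherical harmonic `Y_{n0}(θ,φ) = √((2n+1)/(4π)) P_n(cos θ)`. -/
noncomputable def Yn0 (n : ℕ) (θ : ℝ) : ℝ :=
  Real.sqrt ((2 * n + 1) / (4 * Real.pi)) * legendre n (Real.cos θ)

/-! ### Legendre's equation and values at the equator -/

open Polynomial in
/-- The `n`-th Legendre polynomial as an element of `ℝ[X]`, by the Rodrigues formula. -/
noncomputable def legendrePoly (n : ℕ) : ℝ[X] :=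
  C (1 / (2 ^ n * (n ! : ℝ))) * derivative^[n] ((X ^ 2 - 1) ^ n)

open Polynomial in
lemma iteratedDeriv_eval_poly (n : ℕ) (q : ℝ[X]) :
    iteratedDeriv n (fun t : ℝ => q.eval t) = fun t => (derivative^[n] q).eval t := by
  induction n with
  | zero => simp
  | succ n ih =>
    rw [iteratedDeriv_succ, ih, Function.iterate_succ_apply']
    funext t
    exact Polynomial.deriv _

lemma legendre_eq_eval (n : ℕ) (x : ℝ) : legendre n x = (legendrePoly n).eval x := by
  have h := congrFun (iteratedDeriv_eval_poly n ((Polynomial.X ^ 2 - 1) ^ n)) x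
  simp only [Polynomial.eval_pow, Polynomial.eval_sub, Polynomial.eval_X,
    Polynomial.eval_one] at h
  simp [legendre, legendrePoly, h]

open Polynomial in
/-- The relation `(X² - 1) W' = 2nX W`, satisfied by `W = (X² - 1)ⁿ`, differentiated `k + 1`
times. -/
lemma rodrigues_iterate (n k : ℕ) (W : ℝ[X])
    (hW : (X ^ 2 - 1) * derivative W = C (2 * n : ℝ) * (X * W)) :
    (X ^ 2 - 1) * derivative^[k + 2] W + C (2 * (k + 1) : ℝ) * (X * derivative^[k + 1] W)
      + C (k * (k + 1) : ℝ) * derivative^[k] W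
    = C (2 * n : ℝ) * (X * derivative^[k + 1] W) + C (2 * n * (k + 1) : ℝ) * derivative^[k] W := by
  induction k with
  | zero =>
    have h1 := congrArg derivative hW
    simp only [derivative_mul, derivative_sub, derivative_X_pow, derivative_one,
      derivative_X, derivative_C] at h1
    simp only [Function.iterate_succ_apply', Function.iterate_zero_apply]
    simp at h1 ⊢
    linear_combination h1
  | succ k ih =>
    have h1 := congrArg derivative ih
    simp only [derivative_add, derivative_mul, derivative_sub, derivative_X_pow, derivative_one,
      derivative_X, derivative_C, ← Function.iterate_succ_apply' (⇑derivative)] at h1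
    simp only [Nat.succ_eq_add_one, add_assoc, map_mul, map_add, map_one, map_ofNat, map_natCast,
      Nat.cast_add, Nat.cast_one, Nat.cast_ofNat, Nat.add_one_sub_one, Nat.reduceAdd] at h1 ⊢
    simp only [pow_one] at h1
    linear_combination h1

open Polynomial in
/-- Legendre's differential equation. -/
lemma legendre_ode (n : ℕ) (x : ℝ) :
    (1 - x ^ 2) * (derivative (derivative (legendrePoly n))).eval x
      = 2 * x * (derivative (legendrePoly n)).eval x
        - n * (n + 1) * (legendrePoly n).eval x := by
  have hW : (X ^ 2 - 1) * derivative ((X ^ 2 - 1) ^ n)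
      = C (2 * n : ℝ) * (X * (X ^ 2 - 1) ^ n) := by
    cases n with
    | zero => simp
    | succ m =>
      have h2 : (C 2 : ℝ[X]) = 2 := map_ofNat C 2
      rw [derivative_pow]
      simp [h2]
      ring
  have h := congrArg (eval x) (rodrigues_iterate n n _ hW)
  simp only [legendrePoly, derivative_C_mul, ← Function.iterate_succ_apply' (⇑derivative)]
  simp at h ⊢
  linear_combination (-((n ! : ℝ)⁻¹ * (2 ^ n)⁻¹)) * h

open Polynomial in
lemma coeff_sq_sub_one_pow (n k : ℕ) :
    (((X : ℝ[X]) ^ 2 - 1) ^ n).coeff k =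
      if 2 ∣ k then (-1) ^ (n - k / 2) * (n.choose (k / 2) : ℝ) else 0 := by
  have : ((X : ℝ[X]) ^ 2 - 1) ^ n = expand ℝ 2 ((X + C (-1)) ^ n) := by
    simp [sub_eq_add_neg]
  rw [this, coeff_expand (by norm_num)]
  simp only [coeff_X_add_C_pow]

open Polynomial in
lemma legendrePoly_eval_zero (n : ℕ) :
    (legendrePoly n).eval 0 = (((X : ℝ[X]) ^ 2 - 1) ^ n).coeff n / 2 ^ n := by
  rw [← coeff_zero_eq_eval_zero, legendrePoly, coeff_C_mul, coeff_iterate_derivative]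
  simp [Nat.descFactorial_self]
  have : (n ! : ℝ) ≠ 0 := by positivity
  field_simp

open Polynomial in
lemma derivative_legendrePoly_eval_zero (n : ℕ) :
    (derivative (legendrePoly n)).eval 0
      = (n + 1) * (((X : ℝ[X]) ^ 2 - 1) ^ n).coeff (n + 1) / 2 ^ n := by
  rw [legendrePoly, derivative_C_mul, ← Function.iterate_succ_apply' (⇑derivative),
    ← coeff_zero_eq_eval_zero, coeff_C_mul, coeff_iterate_derivative, zero_add,
    Nat.succ_eq_add_one, Nat.descFactorial_self]
  simp [Nat.factorial_succ]
  have : (n ! : ℝ) ≠ 0 := by positivity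
  field_simp

/-- The value at the equator `θ = π/2` of the Sonin energy `soninS n`. -/
noncomputable def soninA (n : ℕ) : ℝ :=
  (legendrePoly n).eval 0 ^ 2
    + 4 * (Polynomial.derivative (legendrePoly n)).eval 0 ^ 2 / ((2 * n + 1) ^ 2 + 1)

/-- The link between `W m` and the central binomial coefficient: `P_{2m}(0)² = ((2m choose m)/4ᵐ)²`
and `P'_{2m+1}(0)² = (2m + 1)² ((2m choose m)/4ᵐ)²`. -/
lemma wallis_choose (m : ℕ) :
    (((2 * m).choose m : ℝ) / 2 ^ (2 * m)) ^ 2 * Wallis.W m = 1 / (2 * m + 1) := by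
  have h : ((2 * m).choose m : ℝ) = (2 * m)! / ((m)! * (m)!) := by
    rw [Nat.cast_choose ℝ (by lia : m ≤ 2 * m)]
    congr 4
    lia
  rw [Wallis.W_eq_factorial_ratio, h]
  have h1 : (m ! : ℝ) ≠ 0 := by positivity
  have h2 : ((2 * m)! : ℝ) ≠ 0 := by positivity
  have h3 : (2 * m + 1 : ℝ) ≠ 0 := by positivity
  field_simp
  ring

/-- Explicitly, `(2n + 1) Aₙ W(⌊n/2⌋)` is `(2n + 1)/(n + 1)` for even `n` and
`4n (2n + 1)/((2n + 1)² + 1)` for odd `n`. -/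
lemma soninA_mul_W (n : ℕ) :
    |(2 * n + 1) * soninA n * Wallis.W (n / 2) - 2| ≤ 4 / (n + 1) := by
  obtain ⟨m, rfl | rfl⟩ := Nat.even_or_odd' n
  · have hw := wallis_choose m
    have e : (2 * m) / 2 = m := by lia
    have hA : soninA (2 * m) = (((2 * m).choose m : ℝ) / 2 ^ (2 * m)) ^ 2 := by
      rw [soninA, legendrePoly_eval_zero, derivative_legendrePoly_eval_zero,
        coeff_sq_sub_one_pow, coeff_sq_sub_one_pow, if_pos (by lia), if_neg (by lia), e]
      simp only [mul_zero, zero_div, div_pow, mul_pow, ← pow_mul, mul_comm _ 2]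
      simp
    rw [hA, e, mul_assoc, hw]
    push_cast
    have : (2 * (2 * (m : ℝ)) + 1) * (1 / (2 * m + 1)) - 2 = - (1 / (2 * m + 1)) := by
      field_simp
      ring
    rw [this, abs_neg, abs_of_nonneg (by positivity)]
    gcongr
    norm_num
  · have hw := wallis_choose m
    have e : (2 * m + 1) / 2 = m := by lia
    have e' : (2 * m + 1 + 1) / 2 = m + 1 := by lia
    have hc : ((m : ℝ) + 1) * ((2 * m + 1).choose (m + 1) : ℝ)
        = (2 * m + 1) * ((2 * m).choose m : ℝ) := by
      have := Nat.add_one_mul_choose_eq (2 * m) m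
      have h2 : ((2 * m + 1 : ℕ) : ℝ) * ((2 * m).choose m : ℝ)
        = ((2 * m + 1).choose (m + 1) : ℝ) * ((m + 1 : ℕ) : ℝ) := by exact_mod_cast this
      push_cast at h2
      linarith
    have hA : soninA (2 * m + 1) = 4 * ((2 * m + 1) ^ 2 *
        (((2 * m).choose m : ℝ) / 2 ^ (2 * m)) ^ 2) / ((4 * m + 3) ^ 2 + 1) := by
      rw [soninA, legendrePoly_eval_zero, derivative_legendrePoly_eval_zero,
        coeff_sq_sub_one_pow, coeff_sq_sub_one_pow, if_neg (by lia), if_pos (by lia), e']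
      have h3 : ((((2 * m + 1 : ℕ) : ℝ) + 1) * ((-1) ^ (2 * m + 1 - (m + 1)) *
          ((2 * m + 1).choose (m + 1) : ℝ)) / 2 ^ (2 * m + 1)) ^ 2
          = (2 * m + 1) ^ 2 * (((2 * m).choose m : ℝ) / 2 ^ (2 * m)) ^ 2 := by
        have h4 : (((-1 : ℝ)) ^ (2 * m + 1 - (m + 1))) ^ 2 = 1 := by
          rw [← pow_mul, mul_comm, pow_mul]; simp
        have h6 : ((2 * m + 1 : ℕ) : ℝ) = 2 * m + 1 := by push_cast; ring
        rw [h6]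
        have : (2 * (m : ℝ) + 1 + 1) * ((-1) ^ (2 * m + 1 - (m + 1)) *
          ((2 * m + 1).choose (m + 1) : ℝ)) / 2 ^ (2 * m + 1)
          = (-1) ^ (2 * m + 1 - (m + 1)) * (((2 * m + 1) *
            (((2 * m).choose m : ℝ) / 2 ^ (2 * m)))) := by
          rw [pow_succ 2 (2 * m)]
          field_simp
          linear_combination 2 * hc
        rw [this, mul_pow, h4]
        ring
      rw [h3]
      push_cast
      ring
    rw [hA, e]
    have h5 : (2 * ((2 * m + 1 : ℕ) : ℝ) + 1) * (4 * ((2 * m + 1) ^ 2 *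
        (((2 * m).choose m : ℝ) / 2 ^ (2 * m)) ^ 2) / ((4 * m + 3) ^ 2 + 1)) * Wallis.W m - 2
        = - ((8 * m + 8) / (2 * (8 * m ^ 2 + 12 * m + 5))) := by
      have : (2 * ((2 * m + 1 : ℕ) : ℝ) + 1) * (4 * ((2 * m + 1) ^ 2 *
        (((2 * m).choose m : ℝ) / 2 ^ (2 * m)) ^ 2) / ((4 * m + 3) ^ 2 + 1)) * Wallis.W m
        = (4 * m + 3) * (4 * (2 * m + 1) ^ 2 / ((4 * m + 3) ^ 2 + 1)) *
          ((((2 * m).choose m : ℝ) / 2 ^ (2 * m)) ^ 2 * Wallis.W m) := by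
        push_cast
        ring
      rw [this, hw]
      field_simp
      ring
    rw [h5, abs_neg, abs_of_nonneg (by positivity), div_le_div_iff₀ (by positivity) (by positivity)]
    push_cast
    have : (0 : ℝ) ≤ m := by positivity
    nlinarith

/-- By the Wallis product the equatorial energy satisfies `(2n + 1) Aₙ → 4/π`. -/
lemma tendsto_soninA :
    Tendsto (fun n : ℕ => (2 * n + 1) * soninA n) atTop (nhds (4 / π)) := by
  have hW : Tendsto (fun n : ℕ => Wallis.W (n / 2)) atTop (nhds (π / 2)) :=
    Wallis.tendsto_W_nhds_pi_div_two.comp (Nat.tendsto_div_const_atTop (by norm_num))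
  have h1 : Tendsto (fun n : ℕ => (2 * n + 1) * soninA n * Wallis.W (n / 2)) atTop (nhds 2) := by
    rw [tendsto_iff_norm_sub_tendsto_zero]
    refine squeeze_zero (fun _ => norm_nonneg _) (fun n => soninA_mul_W n) ?_
    have := (tendsto_one_div_add_atTop_nhds_zero_nat (𝕜 := ℝ)).const_mul 4
    simpa [div_eq_mul_inv] using this
  have h2 := h1.div hW (by positivity)
  have e : (2 : ℝ) / (π / 2) = 4 / π := by field_simp; norm_num
  rw [e] at h2
  refine h2.congr fun n => ?_
  have := (Wallis.W_pos (n / 2)).ne'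
  simp [this]

/-! ### Sonin's energy -/

section Sonin

open Polynomial

/-- `P_n(cos θ)`. -/
noncomputable def legP (n : ℕ) (θ : ℝ) : ℝ := (legendrePoly n).eval (cos θ)

/-- With `u = √(sin θ) P_n(cos θ)`, this is `2 √(sin θ) u'(θ)`, which is smooth on all of `ℝ`. -/
noncomputable def legR (n : ℕ) (θ : ℝ) : ℝ :=
  cos θ * legP n θ - 2 * sin θ ^ 2 * (derivative (legendrePoly n)).eval (cos θ)

/-- `u = √(sin θ) P_n(cos θ)` satisfies `u'' + q u = 0` with `q = (n + 1/2)² + 1/(4 sin² θ)`;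
this is `4 sin² θ · q`. -/
noncomputable def legD (n : ℕ) (θ : ℝ) : ℝ := (2 * n + 1) ^ 2 * sin θ ^ 2 + 1

/-- Sonin's energy `u² + u'² / q`. -/
noncomputable def soninS (n : ℕ) (θ : ℝ) : ℝ :=
  sin θ * legP n θ ^ 2 + sin θ * legR n θ ^ 2 / legD n θ

/-- The function `u u' / q`, whose derivative is `u'² / q - u²` up to a small error. -/
noncomputable def soninG (n : ℕ) (θ : ℝ) : ℝ :=
  2 * sin θ ^ 2 * (legP n θ * legR n θ) / legD n θ

/-- The error term `-u u' q' / q²` in the derivative of `u u' / q`. -/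
noncomputable def soninH (n : ℕ) (θ : ℝ) : ℝ :=
  4 * cos θ * (sin θ * legP n θ * legR n θ) / legD n θ ^ 2

lemma one_le_legD (n : ℕ) (θ : ℝ) : 1 ≤ legD n θ := by
  unfold legD
  have : 0 ≤ (2 * (n : ℝ) + 1) ^ 2 * sin θ ^ 2 := by positivity
  linarith

lemma legD_pos (n : ℕ) (θ : ℝ) : 0 < legD n θ := zero_lt_one.trans_le (one_le_legD n θ)

lemma hasDerivAt_legP (n : ℕ) (θ : ℝ) :
    HasDerivAt (legP n) (-sin θ * (derivative (legendrePoly n)).eval (cos θ)) θ := by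
  have := ((legendrePoly n).hasDerivAt (cos θ)).comp θ (Real.hasDerivAt_cos θ)
  exact this.congr_deriv (by ring)

/-- The differential equation of `P_n`, as a first-order relation for `legR n`. -/
lemma hasDerivAt_legR (n : ℕ) (θ : ℝ) :
    ∃ r, HasDerivAt (legR n) r θ ∧
      2 * sin θ * r = cos θ * legR n θ - legP n θ * legD n θ := by
  have h1 := ((derivative (legendrePoly n)).hasDerivAt (cos θ)).comp θ (Real.hasDerivAt_cos θ)
  have h2 := ((Real.hasDerivAt_cos θ).mul (hasDerivAt_legP n θ)).sub
    ((((Real.hasDerivAt_sin θ).pow 2).const_mul 2).mul h1)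
  refine ⟨_, h2, ?_⟩
  have ode := legendre_ode n (cos θ)
  have hs : sin θ ^ 2 = 1 - cos θ ^ 2 := by rw [Real.sin_sq]
  simp only [legR, legP, legD, Function.comp, Pi.pow_apply]
  rw [← hs] at ode
  push_cast
  linear_combination (4 * sin θ ^ 2) * ode - (eval (cos θ) (legendrePoly n)) * hs

lemma hasDerivAt_legD (n : ℕ) (θ : ℝ) :
    HasDerivAt (legD n) (2 * (2 * n + 1) ^ 2 * (sin θ * cos θ)) θ := by
  have := (((Real.hasDerivAt_sin θ).pow 2).const_mul ((2 * (n : ℝ) + 1) ^ 2)).add_const 1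
  refine this.congr_deriv ?_
  push_cast
  ring

/-- In terms of `u` and `q`, the derivative of `u² + u'² / q` is `-u'² q' / q²`. -/
lemma hasDerivAt_soninS (n : ℕ) (θ : ℝ) :
    HasDerivAt (soninS n) (2 * cos θ * legR n θ ^ 2 / legD n θ ^ 2) θ := by
  obtain ⟨r, hr, hr'⟩ := hasDerivAt_legR n θ
  have hD := (legD_pos n θ).ne'
  have h := ((Real.hasDerivAt_sin θ).mul ((hasDerivAt_legP n θ).pow 2)).add
    (((Real.hasDerivAt_sin θ).mul (hr.pow 2)).div (hasDerivAt_legD n θ) hD)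
  refine h.congr_deriv ?_
  have hR : 2 * sin θ ^ 2 * (derivative (legendrePoly n)).eval (cos θ)
      = cos θ * legP n θ - legR n θ := by simp only [legR]; ring
  have hD2 : (2 * (n : ℝ) + 1) ^ 2 * sin θ ^ 2 = legD n θ - 1 := by simp only [legD]; ring
  simp only [Pi.pow_apply, Pi.mul_apply]
  push_cast
  field_simp
  linear_combination (-legD n θ ^ 2 * legP n θ) * hR + (legD n θ * legR n θ) * hr'
    - 2 * cos θ * legR n θ ^ 2 * hD2

lemma hasDerivAt_soninG (n : ℕ) (θ : ℝ) :
    HasDerivAt (soninG n) (soninS n θ - 2 * (sin θ * legP n θ ^ 2) + soninH n θ) θ := by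
  obtain ⟨r, hr, hr'⟩ := hasDerivAt_legR n θ
  have hD := (legD_pos n θ).ne'
  have h := ((((Real.hasDerivAt_sin θ).pow 2).const_mul 2).mul
    ((hasDerivAt_legP n θ).mul hr)).div (hasDerivAt_legD n θ) hD
  refine h.congr_deriv ?_
  have hR : 2 * sin θ ^ 2 * (derivative (legendrePoly n)).eval (cos θ)
      = cos θ * legP n θ - legR n θ := by simp only [legR]; ring
  have hD2 : (2 * (n : ℝ) + 1) ^ 2 * sin θ ^ 2 = legD n θ - 1 := by simp only [legD]; ring
  simp only [Pi.pow_apply, Pi.mul_apply, soninS, soninH]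
  push_cast
  field_simp
  linear_combination (-legD n θ * sin θ * legR n θ) * hR
    + (legD n θ * legP n θ * sin θ) * hr'
    - 4 * cos θ * legR n θ * legP n θ * sin θ * hD2

lemma continuous_soninS (n : ℕ) : Continuous (soninS n) :=
  continuous_iff_continuousAt.2 fun θ => (hasDerivAt_soninS n θ).continuousAt

lemma continuous_soninG (n : ℕ) : Continuous (soninG n) :=
  continuous_iff_continuousAt.2 fun θ => (hasDerivAt_soninG n θ).continuousAt

lemma continuous_legP (n : ℕ) : Continuous (legP n) :=
  continuous_iff_continuousAt.2 fun θ => (hasDerivAt_legP n θ).continuousAt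

lemma continuous_legR (n : ℕ) : Continuous (legR n) :=
  continuous_iff_continuousAt.2 fun θ => (hasDerivAt_legR n θ).choose_spec.1.continuousAt

lemma continuous_legD (n : ℕ) : Continuous (legD n) :=
  continuous_iff_continuousAt.2 fun θ => (hasDerivAt_legD n θ).continuousAt

lemma continuous_soninH (n : ℕ) : Continuous (soninH n) := by
  have h1 := continuous_legP n
  have h2 := continuous_legR n
  have h3 := continuous_legD n
  unfold soninH
  exact Continuous.div (by fun_prop) (by fun_prop) fun θ => (pow_pos (legD_pos n θ) 2).ne'

lemma soninS_pi_div_two (n : ℕ) : soninS n (π / 2) = soninA n := by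
  simp [soninS, soninA, legP, legR, legD]
  ring

lemma soninA_nonneg (n : ℕ) : 0 ≤ soninA n := by
  unfold soninA
  positivity

/-- Sonin's argument: `q` decreases on `(0, π/2]` and increases on `[π/2, π)`, so the energy is
largest at the equator. -/
lemma soninS_le (n : ℕ) {θ : ℝ} (h0 : 0 ≤ θ) (hπ : θ ≤ π) : soninS n θ ≤ soninA n := by
  rw [← soninS_pi_div_two]
  rcases le_total θ (π / 2) with h | h
  · refine monotoneOn_of_deriv_nonneg (convex_Icc 0 (π / 2)) (continuous_soninS n).continuousOn
      (fun t _ => (hasDerivAt_soninS n t).differentiableAt.differentiableWithinAt)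
      (fun t ht => ?_) ⟨h0, h⟩ ⟨by positivity, le_rfl⟩ h
    rw [interior_Icc] at ht
    rw [(hasDerivAt_soninS n t).deriv]
    have := Real.cos_nonneg_of_neg_pi_div_two_le_of_le (by linarith [ht.1, Real.pi_pos]) ht.2.le
    positivity
  · refine antitoneOn_of_deriv_nonpos (convex_Icc (π / 2) π) (continuous_soninS n).continuousOn
      (fun t _ => (hasDerivAt_soninS n t).differentiableAt.differentiableWithinAt)
      (fun t ht => ?_) ⟨le_rfl, by linarith [Real.pi_pos]⟩ ⟨h, hπ⟩ h
    rw [interior_Icc] at ht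
    rw [(hasDerivAt_soninS n t).deriv]
    have := Real.cos_nonpos_of_pi_div_two_le_of_le ht.1.le (by linarith [ht.2, Real.pi_pos])
    have h2 : 0 ≤ legR n t ^ 2 / legD n t ^ 2 := by positivity
    rw [mul_div_assoc]
    nlinarith

lemma soninS_nonneg (n : ℕ) {θ : ℝ} (h0 : 0 ≤ θ) (hπ : θ ≤ π) :
    0 ≤ soninS n θ := by
  have := Real.sin_nonneg_of_nonneg_of_le_pi h0 hπ
  have := legD_pos n θ
  unfold soninS
  positivity

/-- The sharp-order pointwise bound on `u²`, uniform up to the poles. -/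
lemma sin_mul_legP_sq_le (n : ℕ) {θ : ℝ} (h0 : 0 ≤ θ) (hπ : θ ≤ π) :
    sin θ * legP n θ ^ 2 ≤ soninA n := by
  refine le_trans ?_ (soninS_le n h0 hπ)
  have := Real.sin_nonneg_of_nonneg_of_le_pi h0 hπ
  have := legD_pos n θ
  unfold soninS
  have : 0 ≤ sin θ * legR n θ ^ 2 / legD n θ := by positivity
  linarith

lemma sin_mul_legR_sq_le (n : ℕ) {θ : ℝ} (h0 : 0 ≤ θ) (hπ : θ ≤ π) :
    sin θ * legR n θ ^ 2 ≤ soninA n * legD n θ := by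
  rw [← div_le_iff₀ (legD_pos n θ)]
  refine le_trans ?_ (soninS_le n h0 hπ)
  have := Real.sin_nonneg_of_nonneg_of_le_pi h0 hπ
  unfold soninS
  have : 0 ≤ sin θ * legP n θ ^ 2 := by positivity
  linarith

lemma legP_mul_legR_sq_le (n : ℕ) {θ : ℝ} (h0 : 0 ≤ θ) (hπ : θ ≤ π) :
    (sin θ * legP n θ * legR n θ) ^ 2 ≤ soninA n ^ 2 * legD n θ := by
  have hs := Real.sin_nonneg_of_nonneg_of_le_pi h0 hπ
  have h1 := sin_mul_legP_sq_le n h0 hπ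
  have h2 := sin_mul_legR_sq_le n h0 hπ
  calc (sin θ * legP n θ * legR n θ) ^ 2
      = (sin θ * legP n θ ^ 2) * (sin θ * legR n θ ^ 2) := by ring
    _ ≤ soninA n * (soninA n * legD n θ) :=
      mul_le_mul h1 h2 (by positivity) (soninA_nonneg n)
    _ = _ := by ring

lemma abs_soninG_le (n : ℕ) {θ : ℝ} (h0 : 0 ≤ θ) (hπ : θ ≤ π) :
    |soninG n θ| ≤ 2 * soninA n / (2 * n + 1) := by
  have hA := soninA_nonneg n
  have hD := legD_pos n θ
  refine abs_le_of_sq_le_sq ?_ (by positivity)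
  have h := legP_mul_legR_sq_le n h0 hπ
  have hD2 : (2 * (n : ℝ) + 1) ^ 2 * sin θ ^ 2 ≤ legD n θ := by simp only [legD]; linarith
  calc soninG n θ ^ 2
      = 4 * sin θ ^ 2 * (sin θ * legP n θ * legR n θ) ^ 2 / legD n θ ^ 2 := by
        unfold soninG; field_simp; ring
    _ ≤ 4 * sin θ ^ 2 * (soninA n ^ 2 * legD n θ) / legD n θ ^ 2 := by gcongr
    _ = 4 * soninA n ^ 2 * (sin θ ^ 2 / legD n θ) := by field_simp
    _ ≤ 4 * soninA n ^ 2 * (1 / (2 * n + 1) ^ 2) := by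
        refine mul_le_mul_of_nonneg_left ?_ (by positivity)
        rw [div_le_div_iff₀ hD (by positivity)]
        linarith
    _ = _ := by field_simp; ring

lemma abs_soninH_le (n : ℕ) {θ : ℝ} (h0 : 0 ≤ θ) (hπ : θ ≤ π) :
    |soninH n θ| ≤ 4 * soninA n / legD n θ := by
  have hA := soninA_nonneg n
  have hD := legD_pos n θ
  have hD1 := one_le_legD n θ
  refine abs_le_of_sq_le_sq ?_ (by positivity)
  have h := legP_mul_legR_sq_le n h0 hπ
  calc soninH n θ ^ 2
      = 16 * cos θ ^ 2 * (sin θ * legP n θ * legR n θ) ^ 2 / legD n θ ^ 4 := by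
        unfold soninH; field_simp; ring
    _ ≤ 16 * 1 * (soninA n ^ 2 * legD n θ) / legD n θ ^ 4 := by
        gcongr
        exact Real.cos_sq_le_one θ
    _ = 16 * soninA n ^ 2 / legD n θ ^ 2 * (1 / legD n θ) := by field_simp
    _ ≤ 16 * soninA n ^ 2 / legD n θ ^ 2 * 1 := by
        gcongr
        rw [div_le_one hD]
        exact hD1
    _ = _ := by field_simp; ring

lemma sin_le_sin_of_mem_uIcc {θ t : ℝ} (h0 : 0 < θ) (hπ : θ < π)
    (ht : t ∈ Set.uIcc θ (π / 2)) : sin θ ≤ sin t := by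
  rcases le_total θ (π / 2) with h | h
  · rw [Set.uIcc_of_le h] at ht
    exact Real.sin_le_sin_of_le_of_le_pi_div_two (by linarith) ht.2 ht.1
  · rw [Set.uIcc_of_ge h] at ht
    rw [← Real.sin_pi_sub θ, ← Real.sin_pi_sub t]
    exact Real.sin_le_sin_of_le_of_le_pi_div_two (by linarith) (by linarith [ht.1])
      (by linarith [ht.2])

/-- Away from the poles the energy is nearly constant. -/
lemma abs_soninS_sub_le (n : ℕ) {θ : ℝ} (h0 : 0 < θ) (hπ : θ < π) :
    |soninS n θ - soninA n| ≤ 2 * soninA n / ((2 * n + 1) ^ 2 * sin θ ^ 3) * 2 := by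
  have hs := Real.sin_pos_of_pos_of_lt_pi h0 hπ
  have hA := soninA_nonneg n
  have key := (convex_uIcc θ (π / 2)).norm_image_sub_le_of_norm_hasDerivWithin_le
    (f := soninS n) (C := 2 * soninA n / ((2 * n + 1) ^ 2 * sin θ ^ 3))
    (fun t _ => (hasDerivAt_soninS n t).hasDerivWithinAt) (fun t ht => ?_)
    Set.right_mem_uIcc Set.left_mem_uIcc
  · rw [soninS_pi_div_two, Real.norm_eq_abs, Real.norm_eq_abs] at key
    refine key.trans ?_
    gcongr
    -- the distance from `θ` to the equator is at most `π/2 ≤ 2`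
    rw [abs_le]
    constructor <;> linarith [Real.pi_le_four]
  · have ht1 : t ∈ Set.Icc 0 π := by
      have : Set.uIcc θ (π / 2) ⊆ Set.Icc 0 π :=
        Set.uIcc_subset_Icc ⟨h0.le, hπ.le⟩ ⟨by positivity, by linarith⟩
      exact this ht
    have hst := sin_le_sin_of_mem_uIcc h0 hπ ht
    have hst0 := hs.trans_le hst
    have hD := legD_pos n t
    have hR := sin_mul_legR_sq_le n ht1.1 ht1.2
    have hR2 : legR n t ^ 2 ≤ soninA n * legD n t / sin t := by
      rw [le_div_iff₀ hst0]; linarith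
    rw [Real.norm_eq_abs, abs_div, abs_mul, abs_mul, abs_of_nonneg (sq_nonneg (legR n t)),
      abs_of_nonneg (sq_nonneg (legD n t)), abs_two]
    calc 2 * |cos t| * legR n t ^ 2 / legD n t ^ 2
        ≤ 2 * 1 * (soninA n * legD n t / sin t) / legD n t ^ 2 := by
          gcongr
          exact Real.abs_cos_le_one t
      _ = 2 * soninA n / (legD n t * sin t) := by field_simp
      _ ≤ 2 * soninA n / (((2 * n + 1) ^ 2 * sin θ ^ 2) * sin θ) := by
          gcongr
          have : sin θ ^ 2 ≤ sin t ^ 2 := by gcongr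
          unfold legD
          have : (2 * (n : ℝ) + 1) ^ 2 * sin θ ^ 2 ≤ (2 * (n : ℝ) + 1) ^ 2 * sin t ^ 2 := by gcongr
          linarith
      _ = _ := by ring

end Sonin

open MeasureTheory intervalIntegral

/-! ### Limits of the integrals -/

lemma exists_bound_soninA :
    ∃ K : ℝ, 0 ≤ K ∧ ∀ n : ℕ, (2 * n + 1) * soninA n ≤ K := by
  obtain ⟨K, hK⟩ := tendsto_soninA.bddAbove_range
  refine ⟨max K 0, le_max_right _ _, fun n => le_max_of_le_left (hK ⟨n, rfl⟩)⟩

lemma tendsto_inv_sq : Tendsto (fun n : ℕ => 1 / (2 * (n : ℝ) + 1) ^ 2) atTop (nhds 0) := by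
  have h : Tendsto (fun n : ℕ => 2 * (n : ℝ) + 1) atTop atTop :=
    tendsto_atTop_add_const_right _ _ (tendsto_natCast_atTop_atTop.const_mul_atTop (by norm_num))
  have := ((tendsto_pow_atTop (n := 2) (by norm_num)).comp h).inv_tendsto_atTop
  refine this.congr fun n => ?_
  simp

lemma tendsto_soninS {θ : ℝ} (h0 : 0 < θ) (hπ : θ < π) :
    Tendsto (fun n : ℕ => (2 * n + 1) * soninS n θ) atTop (nhds (4 / π)) := by
  have hs := Real.sin_pos_of_pos_of_lt_pi h0 hπ
  have h : Tendsto (fun n : ℕ => (2 * n + 1) * soninS n θ - (2 * n + 1) * soninA n)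
      atTop (nhds 0) := by
    have h1 := (tendsto_soninA.mul tendsto_inv_sq).const_mul (4 / sin θ ^ 3)
    simp only [mul_zero] at h1
    refine squeeze_zero_norm (fun n => ?_) h1
    rw [← mul_sub, Real.norm_eq_abs, abs_mul, abs_of_nonneg (by positivity : 0 ≤ 2 * (n : ℝ) + 1)]
    calc (2 * (n : ℝ) + 1) * |soninS n θ - soninA n|
        ≤ (2 * (n : ℝ) + 1) * (2 * soninA n / ((2 * n + 1) ^ 2 * sin θ ^ 3) * 2) := by
          gcongr
          exact abs_soninS_sub_le n h0 hπ
      _ = _ := by field_simp; ring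
  simpa using h.add tendsto_soninA

lemma tendsto_soninH {θ : ℝ} (h0 : 0 < θ) (hπ : θ < π) :
    Tendsto (fun n : ℕ => (2 * n + 1) * soninH n θ) atTop (nhds 0) := by
  have hs := Real.sin_pos_of_pos_of_lt_pi h0 hπ
  have h1 := (tendsto_soninA.mul tendsto_inv_sq).const_mul (4 / sin θ ^ 2)
  simp only [mul_zero] at h1
  refine squeeze_zero_norm (fun n => ?_) h1
  have hA := soninA_nonneg n
  rw [Real.norm_eq_abs, abs_mul, abs_of_nonneg (by positivity : 0 ≤ 2 * (n : ℝ) + 1)]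
  calc (2 * (n : ℝ) + 1) * |soninH n θ|
      ≤ (2 * (n : ℝ) + 1) * (4 * soninA n / ((2 * n + 1) ^ 2 * sin θ ^ 2)) := by
        gcongr
        refine (abs_soninH_le n h0.le hπ.le).trans ?_
        gcongr
        unfold legD
        linarith
    _ = _ := by field_simp

lemma tendsto_soninG {θ : ℝ} (h0 : 0 < θ) (hπ : θ < π) :
    Tendsto (fun n : ℕ => (2 * n + 1) * soninG n θ) atTop (nhds 0) := by
  obtain ⟨K, hK0, hK⟩ := exists_bound_soninA
  have h1 : Tendsto (fun n : ℕ => 2 * K * (1 / (2 * (n : ℝ) + 1))) atTop (nhds 0) := by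
    have h : Tendsto (fun n : ℕ => 2 * (n : ℝ) + 1) atTop atTop :=
      tendsto_atTop_add_const_right _ _
        (tendsto_natCast_atTop_atTop.const_mul_atTop (by norm_num))
    simpa using h.inv_tendsto_atTop.const_mul (2 * K)
  refine squeeze_zero_norm (fun n => ?_) h1
  rw [Real.norm_eq_abs, abs_mul, abs_of_nonneg (by positivity : 0 ≤ 2 * (n : ℝ) + 1)]
  calc (2 * (n : ℝ) + 1) * |soninG n θ|
      ≤ (2 * (n : ℝ) + 1) * (2 * soninA n / (2 * n + 1)) := by
        gcongr
        exact abs_soninG_le n h0.le hπ.le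
    _ = 2 * ((2 * n + 1) * soninA n) * (1 / (2 * n + 1)) := by field_simp
    _ ≤ _ := by gcongr; exact hK n

/-- Dominated convergence on `(0, π)` against a continuous weight. -/
lemma tendsto_integral_weight (g : ℕ → ℝ → ℝ) (hg : ∀ n, Continuous (g n)) (w : ℝ → ℝ)
    (hw : Continuous w) (M l : ℝ) (hM : ∀ n θ, 0 < θ → θ < π → |g n θ| ≤ M)
    (hl : ∀ θ, 0 < θ → θ < π → Tendsto (fun n => g n θ) atTop (nhds l)) :
    Tendsto (fun n => ∫ θ in (0 : ℝ)..π, g n θ * w θ) atTop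
      (nhds (l * ∫ θ in (0 : ℝ)..π, w θ)) := by
  have hne : ∀ᵐ θ : ℝ, θ ≠ π := by simp [ae_iff, measure_singleton]
  rw [← intervalIntegral.integral_const_mul]
  refine intervalIntegral.tendsto_integral_filter_of_dominated_convergence
    (fun θ => M * |w θ|) ?_ ?_ ?_ ?_
  · exact Eventually.of_forall fun n => ((hg n).mul hw).aestronglyMeasurable
  · refine Eventually.of_forall fun n => ?_
    filter_upwards [hne] with θ hθ hmem
    rw [Set.uIoc_of_le Real.pi_pos.le] at hmem
    rw [Real.norm_eq_abs, abs_mul]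
    gcongr
    exact hM n θ hmem.1 (lt_of_le_of_ne hmem.2 hθ)
  · exact (continuous_const.mul hw.abs).intervalIntegrable _ _
  · filter_upwards [hne] with θ hθ hmem
    rw [Set.uIoc_of_le Real.pi_pos.le] at hmem
    exact (hl θ hmem.1 (lt_of_le_of_ne hmem.2 hθ)).mul_const _

/-- Integrate `p · (soninG n)' = p · (soninS n - 2 sin θ P_n² + soninH n)` by parts; `soninG n`
vanishes at both poles. -/
lemma integral_poly_identity (n : ℕ) (p : Polynomial ℝ) :
    ∫ θ in (0 : ℝ)..π, (2 * n + 1) * (sin θ * legP n θ ^ 2) * p.eval θ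
      = ((∫ θ in (0 : ℝ)..π, (2 * n + 1) * soninS n θ * p.eval θ)
        + (∫ θ in (0 : ℝ)..π, (2 * n + 1) * soninG n θ * p.derivative.eval θ)
        + ∫ θ in (0 : ℝ)..π, (2 * n + 1) * soninH n θ * p.eval θ) / 2 := by
  have cS := continuous_soninS n
  have cG := continuous_soninG n
  have cH := continuous_soninH n
  have cP := continuous_legP n
  have key := integral_mul_deriv_eq_deriv_mul (a := 0) (b := π)
    (u := fun θ => p.eval θ) (v := soninG n)
    (u' := fun θ => p.derivative.eval θ)
    (v' := fun θ => soninS n θ - 2 * (sin θ * legP n θ ^ 2) + soninH n θ)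
    (fun θ _ => p.hasDerivAt θ) (fun θ _ => hasDerivAt_soninG n θ)
    (Continuous.intervalIntegrable (by fun_prop) _ _)
    (Continuous.intervalIntegrable (by fun_prop) _ _)
  have g0 : soninG n 0 = 0 := by simp [soninG]
  have gπ : soninG n π = 0 := by simp [soninG]
  rw [g0, gπ, mul_zero, mul_zero, sub_zero, zero_sub] at key
  have e : ∫ θ in (0 : ℝ)..π, (2 * n + 1) * (sin θ * legP n θ ^ 2) * p.eval θ
      = ∫ θ in (0 : ℝ)..π, ((2 * n + 1) * soninS n θ * p.eval θ
        + (2 * n + 1) * soninH n θ * p.eval θ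
        - (2 * n + 1) * (p.eval θ * (soninS n θ - 2 * (sin θ * legP n θ ^ 2) + soninH n θ))) / 2 := by
    congr 1
    funext θ
    ring
  have e2 : ∫ θ in (0 : ℝ)..π, (2 * n + 1) * soninG n θ * p.derivative.eval θ
      = (2 * n + 1) * ∫ θ in (0 : ℝ)..π, p.derivative.eval θ * soninG n θ := by
    rw [← intervalIntegral.integral_const_mul]
    congr 1
    funext θ
    ring
  rw [e, e2, intervalIntegral.integral_div, intervalIntegral.integral_sub,
    intervalIntegral.integral_add, intervalIntegral.integral_const_mul, key]
  · ring
  all_goals exact Continuous.intervalIntegrable (by fun_prop) _ _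

/-- The weak limit tested against polynomials in `θ`. -/
lemma tendsto_integral_poly (p : Polynomial ℝ) :
    Tendsto (fun n : ℕ => ∫ θ in (0 : ℝ)..π, (2 * n + 1) * (sin θ * legP n θ ^ 2) * p.eval θ)
      atTop (nhds (2 / π * ∫ θ in (0 : ℝ)..π, p.eval θ)) := by
  obtain ⟨K, hK0, hK⟩ := exists_bound_soninA
  have cp : Continuous fun θ => p.eval θ := p.continuous
  have cp' : Continuous fun θ => p.derivative.eval θ := p.derivative.continuous
  have hn (n : ℕ) : (0 : ℝ) ≤ 2 * n + 1 := by positivity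
  have t1 := tendsto_integral_weight (fun n θ => (2 * n + 1) * soninS n θ)
    (fun n => (continuous_soninS n).const_mul _) _ cp K (4 / π)
    (fun n θ h0 hπ => by
      rw [abs_mul, abs_of_nonneg (hn n), abs_of_nonneg (soninS_nonneg n h0.le hπ.le)]
      exact le_trans (mul_le_mul_of_nonneg_left (soninS_le n h0.le hπ.le) (hn n)) (hK n))
    (fun θ h0 hπ => tendsto_soninS h0 hπ)
  have t2 := tendsto_integral_weight (fun n θ => (2 * n + 1) * soninG n θ)
    (fun n => (continuous_soninG n).const_mul _) _ cp' (2 * K) 0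
    (fun n θ h0 hπ => by
      rw [abs_mul, abs_of_nonneg (hn n)]
      have h1 : 2 * soninA n / (2 * n + 1) ≤ 2 * soninA n :=
        div_le_self (by linarith [soninA_nonneg n]) (by linarith [n.cast_nonneg (α := ℝ)])
      have h2 := mul_le_mul_of_nonneg_left ((abs_soninG_le n h0.le hπ.le).trans h1) (hn n)
      linarith [hK n])
    (fun θ h0 hπ => tendsto_soninG h0 hπ)
  have t3 := tendsto_integral_weight (fun n θ => (2 * n + 1) * soninH n θ)
    (fun n => (continuous_soninH n).const_mul _) _ cp (4 * K) 0
    (fun n θ h0 hπ => by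
      rw [abs_mul, abs_of_nonneg (hn n)]
      have h1 : 4 * soninA n / legD n θ ≤ 4 * soninA n :=
        div_le_self (by linarith [soninA_nonneg n]) (one_le_legD n θ)
      have h2 := mul_le_mul_of_nonneg_left ((abs_soninH_le n h0.le hπ.le).trans h1) (hn n)
      linarith [hK n])
    (fun θ h0 hπ => tendsto_soninH h0 hπ)
  have t := ((t1.add t2).add t3).div_const 2
  simp only [integral_poly_identity]
  convert t using 2
  ring

/-- Polynomials are dense in `L¹(0, π)`. -/
lemma exists_poly_integral_sub_le (F : ℝ → ℝ) (hF : IntervalIntegrable F volume 0 π)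
    {ε : ℝ} (hε : 0 < ε) :
    ∃ p : Polynomial ℝ, ∫ θ in (0 : ℝ)..π, |F θ - p.eval θ| ≤ ε := by
  have hF' : Integrable F (volume.restrict (Set.Ioc 0 π)) :=
    (intervalIntegrable_iff_integrableOn_Ioc_of_le Real.pi_pos.le).1 hF
  obtain ⟨g, -, hg, hgc, -⟩ := hF'.exists_hasCompactSupport_integral_sub_le (half_pos hε)
  obtain ⟨p, hp⟩ := exists_polynomial_near_of_continuousOn 0 π g hgc.continuousOn
    (ε / (2 * π)) (by positivity)
  refine ⟨p, ?_⟩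
  have ig := hgc.intervalIntegrable (μ := volume) 0 π
  have ip := p.continuous.intervalIntegrable (μ := volume) 0 π
  have h1 : ∫ θ in (0 : ℝ)..π, |F θ - p.eval θ|
      ≤ ∫ θ in (0 : ℝ)..π, (|F θ - g θ| + ε / (2 * π)) := by
    refine intervalIntegral.integral_mono_on Real.pi_pos.le (hF.sub ip).abs
      ((hF.sub ig).abs.add intervalIntegrable_const) fun θ hθ => ?_
    have := hp θ hθ
    have h2 := abs_sub_le (F θ) (g θ) (p.eval θ)
    rw [abs_sub_comm (g θ)] at h2
    linarith
  rw [intervalIntegral.integral_add (hF.sub ig).abs intervalIntegrable_const,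
    intervalIntegral.integral_const] at h1
  have h3 : ∫ θ in (0 : ℝ)..π, |F θ - g θ| ≤ ε / 2 := by
    rw [intervalIntegral.integral_of_le Real.pi_pos.le]
    exact hg
  have h4 : (π - 0) • (ε / (2 * π)) = ε / 2 := by
    rw [smul_eq_mul]
    field_simp
    ring
  linarith

/-- The weak limit tested against integrable functions of the colatitude. -/
lemma tendsto_integral_L1 (F : ℝ → ℝ) (hF : IntervalIntegrable F volume 0 π) :
    Tendsto (fun n : ℕ => ∫ θ in (0 : ℝ)..π, (2 * n + 1) * (sin θ * legP n θ ^ 2) * F θ)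
      atTop (nhds (2 / π * ∫ θ in (0 : ℝ)..π, F θ)) := by
  obtain ⟨K, hK0, hK⟩ := exists_bound_soninA
  rw [Metric.tendsto_atTop]
  intro ε hε
  have hM : 0 < K + 2 / π + 1 := by positivity
  obtain ⟨p, hp⟩ := exists_poly_integral_sub_le F hF (ε := ε / (2 * (K + 2 / π + 1)))
    (by positivity)
  obtain ⟨N, hN⟩ := Metric.tendsto_atTop.1 (tendsto_integral_poly p) (ε / 2) (half_pos hε)
  refine ⟨N, fun n hn => ?_⟩
  have ip := p.continuous.intervalIntegrable (μ := volume) 0 π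
  have ch : Continuous fun θ => (2 * (n : ℝ) + 1) * (sin θ * legP n θ ^ 2) := by
    have := continuous_legP n
    fun_prop
  have hsub := (hF.sub ip).abs
  have h1 : |(∫ θ in (0 : ℝ)..π, (2 * n + 1) * (sin θ * legP n θ ^ 2) * F θ)
      - ∫ θ in (0 : ℝ)..π, (2 * n + 1) * (sin θ * legP n θ ^ 2) * p.eval θ|
      ≤ K * ∫ θ in (0 : ℝ)..π, |F θ - p.eval θ| := by
    rw [← intervalIntegral.integral_sub (hF.continuousOn_mul ch.continuousOn)
      (ip.continuousOn_mul ch.continuousOn), ← intervalIntegral.integral_const_mul,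
      ← Real.norm_eq_abs]
    refine intervalIntegral.norm_integral_le_of_norm_le Real.pi_pos.le
      (Eventually.of_forall fun θ hθ => ?_) (hsub.const_mul K)
    have hs := Real.sin_nonneg_of_nonneg_of_le_pi hθ.1.le hθ.2
    rw [← mul_sub, Real.norm_eq_abs, abs_mul, abs_of_nonneg (by positivity)]
    gcongr
    refine le_trans ?_ (hK n)
    gcongr
    exact sin_mul_legP_sq_le n hθ.1.le hθ.2
  have h2 : |2 / π * (∫ θ in (0 : ℝ)..π, p.eval θ) - 2 / π * ∫ θ in (0 : ℝ)..π, F θ|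
      ≤ 2 / π * ∫ θ in (0 : ℝ)..π, |F θ - p.eval θ| := by
    rw [← mul_sub, abs_mul, abs_of_nonneg (by positivity : 0 ≤ 2 / π), abs_sub_comm,
      ← intervalIntegral.integral_sub hF ip]
    gcongr
    exact intervalIntegral.abs_integral_le_integral_abs Real.pi_pos.le
  have h3 := hN n hn
  rw [Real.dist_eq] at h3 ⊢
  have h4 : (K + 2 / π) * ∫ θ in (0 : ℝ)..π, |F θ - p.eval θ| < ε / 2 := by
    calc (K + 2 / π) * ∫ θ in (0 : ℝ)..π, |F θ - p.eval θ|
        ≤ (K + 2 / π) * (ε / (2 * (K + 2 / π + 1))) := by gcongr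
      _ < (K + 2 / π + 1) * (ε / (2 * (K + 2 / π + 1))) := by
          refine mul_lt_mul_of_pos_right (by linarith) (by positivity)
      _ = ε / 2 := by field_simp
  rw [abs_le] at h1 h2
  rw [abs_lt] at h3 ⊢
  constructor <;> linarith [h1.1, h1.2, h2.1, h2.2, h3.1, h3.2]

/-- Weak limit of `|Y_{n0}|²`: for bounded measurable `f` on the sphere (in spherical
coordinates), `∫₀^{2π}∫₀^π |Y_{n0}|² f sin θ dθ dφ → (1/(2π²)) ∫₀^π ∫₀^{2π} f dφ dθ`. -/
theorem Yn0_squared_weak_limit (f : ℝ × ℝ → ℝ) (hmeas : Measurable f)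
    (hbdd : ∃ C : ℝ, ∀ p : ℝ × ℝ, |f p| ≤ C) :
    Tendsto (fun n : ℕ =>
        ∫ ϕ in (0 : ℝ)..(2 * Real.pi), ∫ θ in (0 : ℝ)..Real.pi,
          (Yn0 n θ) ^ 2 * f (θ, ϕ) * Real.sin θ)
      atTop
      (nhds ((1 / (2 * Real.pi ^ 2)) *
        ∫ θ in (0 : ℝ)..Real.pi, ∫ ϕ in (0 : ℝ)..(2 * Real.pi), f (θ, ϕ))) := by
  obtain ⟨C, hC⟩ := hbdd
  have h2π : (0 : ℝ) ≤ 2 * π := by positivity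
  have hint : Integrable f ((volume.restrict (Set.Ioc 0 π)).prod
      (volume.restrict (Set.Ioc 0 (2 * π)))) :=
    Integrable.of_bound hmeas.aestronglyMeasurable C (Eventually.of_forall hC)
  have hF : IntervalIntegrable (fun θ => ∫ ϕ in (0 : ℝ)..(2 * π), f (θ, ϕ)) volume 0 π := by
    rw [intervalIntegrable_iff_integrableOn_Ioc_of_le Real.pi_pos.le]
    simp only [intervalIntegral.integral_of_le h2π]
    exact hint.integral_prod_left
  have hlim := (tendsto_integral_L1 _ hF).const_mul (1 / (4 * π))
  have e : 1 / (4 * π) * (2 / π * ∫ θ in (0 : ℝ)..π, ∫ ϕ in (0 : ℝ)..(2 * π), f (θ, ϕ))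
      = (1 / (2 * π ^ 2)) * ∫ θ in (0 : ℝ)..π, ∫ ϕ in (0 : ℝ)..(2 * π), f (θ, ϕ) := by
    field_simp
    ring
  rw [e] at hlim
  refine hlim.congr fun n => ?_
  have hY (θ : ℝ) : Yn0 n θ ^ 2 = (2 * n + 1) / (4 * π) * legP n θ ^ 2 := by
    rw [Yn0, mul_pow, Real.sq_sqrt (by positivity), legendre_eq_eval, legP]
  have cY : Continuous fun θ => Yn0 n θ ^ 2 := by
    have := continuous_legP n
    simp only [hY]
    fun_prop
  have hsw := intervalIntegral_intervalIntegral_swap (a := 0) (b := 2 * π) (c := 0) (d := π)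
    (F := fun ϕ θ => (Yn0 n θ) ^ 2 * f (θ, ϕ) * sin θ) ?_
  · rw [hsw, ← intervalIntegral.integral_const_mul]
    congr 1
    funext θ
    rw [intervalIntegral.integral_mul_const, intervalIntegral.integral_const_mul, hY]
    field_simp
  · rw [Set.uIoc_of_le h2π, Set.uIoc_of_le Real.pi_pos.le]
    obtain ⟨B, hB⟩ := (isCompact_Icc (a := 0) (b := π)).exists_bound_of_continuousOn
      (cY.mul continuous_sin).continuousOn
    have hb : ∀ z ∈ Set.Ioc (0 : ℝ) (2 * π) ×ˢ Set.Ioc (0 : ℝ) π,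
        ‖(Function.uncurry fun ϕ θ => (Yn0 n θ) ^ 2 * f (θ, ϕ) * sin θ) z‖ ≤ B * C := by
      rintro ⟨ϕ, θ⟩ ⟨-, hθ⟩
      have h1 := hB θ ⟨hθ.1.le, hθ.2⟩
      calc ‖Yn0 n θ ^ 2 * f (θ, ϕ) * sin θ‖ = ‖Yn0 n θ ^ 2 * sin θ‖ * |f (θ, ϕ)| := by
            rw [← Real.norm_eq_abs, ← norm_mul]
            ring_nf
        _ ≤ B * C := mul_le_mul h1 (hC _) (abs_nonneg _) ((norm_nonneg _).trans h1)
    have hms : Measurable (Function.uncurry fun ϕ θ => (Yn0 n θ) ^ 2 * f (θ, ϕ) * sin θ) := by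
      have h1 : Measurable fun z : ℝ × ℝ => Yn0 n z.2 ^ 2 := cY.measurable.comp measurable_snd
      have h2 : Measurable fun z : ℝ × ℝ => f (z.2, z.1) := hmeas.comp measurable_swap
      have h3 : Measurable fun z : ℝ × ℝ => sin z.2 := by fun_prop
      exact (h1.mul h2).mul h3
    have hfin : volume (Set.Ioc (0 : ℝ) (2 * π) ×ˢ Set.Ioc (0 : ℝ) π) ≠ ⊤ := by
      rw [Measure.volume_eq_prod, Measure.prod_prod, Real.volume_Ioc, Real.volume_Ioc]
      exact ENNReal.mul_ne_top ENNReal.ofReal_ne_top ENNReal.ofReal_ne_top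
    exact Measure.integrableOn_of_bounded hfin hms.aestronglyMeasurable
      ((ae_restrict_iff' (measurableSet_Ioc.prod measurableSet_Ioc)).2 (Eventually.of_forall hb))
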